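/- Fix ℓ ∈ ℕ and an open interval I ⊆ (0,∞). Suppose that for each ζ ∈ I, (P_k(·;ζ))_{k∈ℕ} is an orthonormal family for the weight ω^{(ℓ)}(·;ζ), and that each coefficient of the polynomial P_k(·;ζ) is a differentiable function of ζ on I. Then for every k ≥ 0, every ζ ∈ I and every x ∈ ℝ: ∂P_{k+1}/∂ζ (x;ζ) = a_k(ζ)·P_k(x;ζ) − (1/2)·(G(ζ) − 1/ζ − b_{k+1}(ζ))·P_{k+1}(x;ζ), where a_k(ζ) := ∫₁^∞ x·P_k(x;ζ)·P_{k+1}(x;ζ)·ω^{(ℓ)}(x;ζ) dx, b_{k+1}(ζ) := ∫₁^∞ x·P_{k+1}(x;ζ)²·ω^{(ℓ)}(x;ζ) dx, and G(ζ) := K₃(ζ)/K₂(ζ). -/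

import Mathlib

open MeasureTheory Polynomial

/-- `K₂(ζ) = ∫₀^∞ cosh(2t)·exp(−ζ·cosh t) dt`. -/
noncomputable def K2 (ζ : ℝ) : ℝ :=
  ∫ t in Set.Ioi (0 : ℝ), Real.cosh (2 * t) * Real.exp (-ζ * Real.cosh t)

/-- The weight `ω^{(ℓ)}(x;ζ) = ζ·(x²−1)^{ℓ+1/2}·exp(−ζx)/((2ℓ+1)·K₂(ζ))` on `[1,∞)`. -/
noncomputable def wgt (l : ℕ) (ζ : ℝ) (x : ℝ) : ℝ :=
  ζ * (x ^ 2 - 1) ^ ((l : ℝ) + 1 / 2) * Real.exp (-ζ * x) / ((2 * (l : ℝ) + 1) * K2 ζ)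

/-- An orthonormal family for the weight `ω^{(ℓ)}(·;ζ)`: real polynomials `P k` of degree
exactly `k`, positive leading coefficients, orthonormal for the weighted inner product. -/
def IsOrthoFam (l : ℕ) (ζ : ℝ) (P : ℕ → Polynomial ℝ) : Prop :=
  (∀ k : ℕ, (P k).degree = k) ∧ (∀ k : ℕ, 0 < (P k).leadingCoeff) ∧
  ∀ i k : ℕ, (∫ x in Set.Ioi (1 : ℝ), (P i).eval x * (P k).eval x * wgt l ζ x)
      = if i = k then 1 else 0

/-- Modified Bessel function of the second kind,
`K_ν(ζ) = ∫₀^∞ cosh(νt)·exp(−ζ·cosh t) dt`. -/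
noncomputable def besselK (ν ζ : ℝ) : ℝ :=
  ∫ t in Set.Ioi (0 : ℝ), Real.cosh (ν * t) * Real.exp (-ζ * Real.cosh t)

/-- `G(ζ) = K₃(ζ)/K₂(ζ)`. -/
noncomputable def Gfn (ζ : ℝ) : ℝ := besselK 3 ζ / besselK 2 ζ

/-- `a_k(ζ) = ∫ x·P_k·P_{k+1}·ω^{(ℓ)} dx`. -/
noncomputable def aCoef (l : ℕ) (ζ : ℝ) (P : ℕ → Polynomial ℝ) (k : ℕ) : ℝ :=
  ∫ x in Set.Ioi (1 : ℝ), x * (P k).eval x * (P (k + 1)).eval x * wgt l ζ x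

/-- `b_k(ζ) = ∫ x·P_k²·ω^{(ℓ)} dx`. -/
noncomputable def bCoef (l : ℕ) (ζ : ℝ) (P : ℕ → Polynomial ℝ) (k : ℕ) : ℝ :=
  ∫ x in Set.Ioi (1 : ℝ), x * (P k).eval x ^ 2 * wgt l ζ x

/-!
Writing `L_ζ(p) = ∫₁^∞ p ω^{(ℓ)}(·;ζ)`, the equation `∂ω/∂ζ = (c − x) ω` with `c = G − 1/ζ` says
that `L_ζ` has derivative `L' : p ↦ L_ζ((c − X) p)`. Differentiating `L_ζ(P_i P_j) = δ_{ij}` gives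
`L_ζ(P_i' P_j) + L_ζ(P_i P_j') + L'(P_i P_j) = 0`. For `i < j` the first term vanishes because
`deg P_i' ≤ i`, and for `i = j` the first two agree, so the Fourier coefficients of `P_j'` are
`-L'(P_i P_j)` for `i < j` and `-L'(P_j²)/2` for `i = j`. Only those with `i ≥ j - 1` survive, since
`X P_i` has degree `i + 1`. The constant `c` comes from the normalisation `ζ / K₂(ζ)` through the
Bessel recurrences `K_{ν+1} + K_{ν-1} = -2 K_ν'` and `K_{ν+1} - K_{ν-1} = (2ν/ζ) K_ν`.
-/

section CoeffDeriv

open Filter Topology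

variable {𝕜 : Type*} [NontriviallyNormedField 𝕜] {p q : 𝕜 → 𝕜[X]} {p' q' : 𝕜[X]} {z : 𝕜} {N : ℕ}

/-- The polynomial `p'` is the derivative at `z` of the family `p`, coefficient by coefficient.
Coefficientwise differentiation avoids choosing a topology on `𝕜[X]`; it determines the derivative
of expressions in `p w` only when the degrees stay bounded near `z`. -/
def HasCoeffDerivAt (p : 𝕜 → 𝕜[X]) (p' : 𝕜[X]) (z : 𝕜) : Prop :=
  ∀ n, HasDerivAt (fun w => (p w).coeff n) (p'.coeff n) z

theorem hasDerivAt_coeff_zero (hdeg : ∀ᶠ w in 𝓝 z, (p w).degree < N) {n : ℕ} (hn : N ≤ n) :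
    HasDerivAt (fun w => (p w).coeff n) 0 z :=
  (hasDerivAt_const z 0).congr_of_eventuallyEq <| hdeg.mono fun w hw =>
    (degree_lt_iff_coeff_zero (p w) N).1 hw n hn

theorem exists_hasCoeffDerivAt (hdeg : ∀ᶠ w in 𝓝 z, (p w).degree < N)
    (hdiff : ∀ n, DifferentiableAt 𝕜 (fun w => (p w).coeff n) z) :
    ∃ p', HasCoeffDerivAt p p' z := by
  refine ⟨∑ i ∈ Finset.range N, monomial i (deriv (fun w => (p w).coeff i) z), fun n => ?_⟩
  simp only [finsetSum_coeff, coeff_monomial, Finset.sum_ite_eq', Finset.mem_range]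
  split_ifs with hn
  · exact (hdiff n).hasDerivAt
  · exact hasDerivAt_coeff_zero hdeg (not_lt.1 hn)

theorem HasCoeffDerivAt.degree_lt (hp : HasCoeffDerivAt p p' z)
    (hdeg : ∀ᶠ w in 𝓝 z, (p w).degree < N) : p'.degree < N :=
  (degree_lt_iff_coeff_zero p' N).2 fun n hn => (hp n).unique (hasDerivAt_coeff_zero hdeg hn)

theorem HasCoeffDerivAt.mul (hp : HasCoeffDerivAt p p' z) (hq : HasCoeffDerivAt q q' z) :
    HasCoeffDerivAt (fun w => p w * q w) (p' * q z + p z * q') z := fun n => by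
  simp only [coeff_mul, coeff_add, ← Finset.sum_add_distrib]
  exact HasDerivAt.fun_sum fun _ _ => (hp _).mul (hq _)

theorem map_eq_sum_coeff_mul {R : Type*} [CommSemiring R] (L : R[X] →ₗ[R] R) {p : R[X]} {N : ℕ}
    (hp : p.degree < N) : L p = ∑ i ∈ Finset.range N, p.coeff i * L (X ^ i) := by
  have hsum : p = ∑ i ∈ Finset.range N, C (p.coeff i) * X ^ i := by
    ext n
    simpa [finsetSum_coeff, coeff_X_pow] using (degree_lt_iff_coeff_zero p N).1 hp n
  conv_lhs => rw [hsum]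
  simp only [map_sum, ← smul_eq_C_mul, map_smul, smul_eq_mul]

theorem HasCoeffDerivAt.map {L : 𝕜 → 𝕜[X] →ₗ[𝕜] 𝕜} {L' : 𝕜[X] →ₗ[𝕜] 𝕜}
    (hp : HasCoeffDerivAt p p' z) (hdeg : ∀ᶠ w in 𝓝 z, (p w).degree < N)
    (hL : ∀ n, HasDerivAt (fun w => L w (X ^ n)) (L' (X ^ n)) z) :
    HasDerivAt (fun w => L w (p w)) (L z p' + L' (p z)) z := by
  rw [map_eq_sum_coeff_mul (L z) (hp.degree_lt hdeg), map_eq_sum_coeff_mul L' hdeg.self_of_nhds,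
    ← Finset.sum_add_distrib]
  exact (HasDerivAt.fun_sum fun i _ => (hp i).mul (hL i)).congr_of_eventuallyEq
    (hdeg.mono fun w hw => map_eq_sum_coeff_mul (L w) hw)

theorem HasCoeffDerivAt.eval (hp : HasCoeffDerivAt p p' z)
    (hdeg : ∀ᶠ w in 𝓝 z, (p w).degree < N) (x : 𝕜) :
    HasDerivAt (fun w => (p w).eval x) (p'.eval x) z := by
  simpa using hp.map (L := fun _ => leval x) (L' := 0) hdeg fun n => hasDerivAt_const z _

end CoeffDeriv

section OrthonormalSeq

variable {K : Type*} [Field K] {L : K[X] →ₗ[K] K} {P : ℕ → K[X]}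

/-- A sequence of orthonormal polynomials for the linear functional `L`, that is for the bilinear
form `(p, q) ↦ L (p * q)`: the `k`-th polynomial has degree `k`. -/
structure IsOrthonormalSeq (L : K[X] →ₗ[K] K) (P : ℕ → K[X]) : Prop where
  degree_eq : ∀ k, (P k).degree = k
  map_mul : ∀ i j, L (P i * P j) = if i = j then 1 else 0

namespace IsOrthonormalSeq

theorem eq_sum_smul (h : IsOrthonormalSeq L P) {n : ℕ} {q : K[X]} (hq : q.degree < n) :
    q = ∑ i ∈ Finset.range n, L (q * P i) • P i := by
  let S : Sequence K := ⟨P, h.degree_eq⟩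
  have hspan : q ∈ Submodule.span K (S '' Set.Iio n) := by
    rw [S.span_degreeLT fun i _ => (leadingCoeff_ne_zero.2 (S.ne_zero i)).isUnit]
    exact mem_degreeLT.2 hq
  let fourierSum : K[X] →ₗ[K] K[X] :=
    ∑ i ∈ Finset.range n, (L ∘ₗ LinearMap.mulRight K (P i)).smulRight (P i)
  have hfix : Set.EqOn (LinearMap.id : K[X] →ₗ[K] K[X]) fourierSum (S '' Set.Iio n) := by
    rintro _ ⟨j, hj, rfl⟩
    simp [fourierSum, S, h.map_mul, Set.mem_Iio.1 hj]
  simpa [fourierSum] using LinearMap.eqOn_span hfix hspan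

theorem map_mul_eq_zero (h : IsOrthonormalSeq L P) {n : ℕ} {q : K[X]} (hq : q.degree < n) :
    L (q * P n) = 0 := by
  rw [h.eq_sum_smul hq, Finset.sum_mul, map_sum]
  refine Finset.sum_eq_zero fun i hi => ?_
  rw [smul_mul_assoc, map_smul, h.map_mul, if_neg (Finset.mem_range.1 hi).ne, smul_zero]

theorem degree_lt_succ (h : IsOrthonormalSeq L P) (k : ℕ) : (P k).degree < (k + 1 : ℕ) := by
  rw [h.degree_eq]
  exact_mod_cast k.lt_succ_self

end IsOrthonormalSeq

end OrthonormalSeq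

section Deformation

open Filter Topology

variable {𝕜 : Type*} [NontriviallyNormedField 𝕜] {L : 𝕜 → 𝕜[X] →ₗ[𝕜] 𝕜} {P : 𝕜 → ℕ → 𝕜[X]}
  {P' : ℕ → 𝕜[X]} {L' : 𝕜[X] →ₗ[𝕜] 𝕜} {z : 𝕜}

theorem map_mul_add_map_mul_add_eq_zero
    (hL : ∀ n, HasDerivAt (fun w => L w (X ^ n)) (L' (X ^ n)) z)
    (hP : ∀ᶠ w in 𝓝 z, IsOrthonormalSeq (L w) (P w))
    (hP' : ∀ k, HasCoeffDerivAt (fun w => P w k) (P' k) z) (i j : ℕ) :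
    L z (P' i * P z j) + L z (P z i * P' j) + L' (P z i * P z j) = 0 := by
  have hdeg : ∀ᶠ w in 𝓝 z, (P w i * P w j).degree < (i + j + 1 : ℕ) := hP.mono fun w hw => by
    rw [degree_mul, hw.degree_eq, hw.degree_eq]
    exact_mod_cast (i + j).lt_succ_self
  have hderiv := ((hP' i).mul (hP' j)).map hdeg hL
  have hconst : HasDerivAt (fun w => L w (P w i * P w j)) 0 z :=
    (hasDerivAt_const z (if i = j then 1 else 0)).congr_of_eventuallyEq <|
      hP.mono fun w hw => hw.map_mul i j
  rw [← map_add]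
  exact hderiv.unique hconst

theorem deriv_orthonormalSeq_eq_sum [NeZero (2 : 𝕜)]
    (hL : ∀ n, HasDerivAt (fun w => L w (X ^ n)) (L' (X ^ n)) z)
    (hP : ∀ᶠ w in 𝓝 z, IsOrthonormalSeq (L w) (P w))
    (hP' : ∀ k, HasCoeffDerivAt (fun w => P w k) (P' k) z) (j : ℕ) :
    P' j = -(∑ i ∈ Finset.range j, L' (P z i * P z j) • P z i)
      - (L' (P z j * P z j) / 2) • P z j := by
  have h := hP.self_of_nhds
  have hdeg (k : ℕ) : (P' k).degree < (k + 1 : ℕ) :=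
    (hP' k).degree_lt <| hP.mono fun w hw => hw.degree_lt_succ k
  have hlower : ∀ i < j, L z (P' j * P z i) = -L' (P z i * P z j) := fun i hi => by
    have horth : L z (P' i * P z j) = 0 :=
      h.map_mul_eq_zero ((hdeg i).trans_le (by exact_mod_cast hi))
    rw [mul_comm (P' j)]
    linear_combination map_mul_add_map_mul_add_eq_zero hL hP hP' i j - horth
  have hdiag : L z (P' j * P z j) = -(L' (P z j * P z j) / 2) := by
    have hnorm := map_mul_add_map_mul_add_eq_zero hL hP hP' j j
    rw [mul_comm (P z j) (P' j)] at hnorm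
    field_simp
    linear_combination hnorm
  rw [h.eq_sum_smul (hdeg j), Finset.sum_range_succ, hdiag,
    Finset.sum_congr rfl fun i hi => by rw [hlower i (Finset.mem_range.1 hi)]]
  simp only [neg_smul, Finset.sum_neg_distrib, sub_eq_add_neg]

theorem deriv_orthonormalSeq_toda [NeZero (2 : 𝕜)] {c : 𝕜}
    (hL : ∀ n, HasDerivAt (fun w => L w (X ^ n)) (c * L z (X ^ n) - L z (X ^ (n + 1))) z)
    (hP : ∀ᶠ w in 𝓝 z, IsOrthonormalSeq (L w) (P w))
    (hP' : ∀ k, HasCoeffDerivAt (fun w => P w k) (P' k) z) (k : ℕ) :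
    P' (k + 1) = L z (X * P z k * P z (k + 1)) • P z k
      - ((c - L z (X * P z (k + 1) * P z (k + 1))) / 2) • P z (k + 1) := by
  let L' : 𝕜[X] →ₗ[𝕜] 𝕜 := c • L z - L z ∘ₗ LinearMap.mulLeft 𝕜 X
  have hL'_apply (i j : ℕ) :
      L' (P z i * P z j) = c * (if i = j then 1 else 0) - L z (X * P z i * P z j) := by
    simp [L', hP.self_of_nhds.map_mul, mul_assoc]
  have hbelow : ∀ i < k, L' (P z i * P z (k + 1)) = 0 := fun i hi => by
    have hdeg : (X * P z i).degree < ((k + 1 : ℕ) : WithBot ℕ) := by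
      rw [degree_mul, degree_X, hP.self_of_nhds.degree_eq]
      exact_mod_cast (by omega : 1 + i < k + 1)
    rw [hL'_apply, if_neg (by omega), hP.self_of_nhds.map_mul_eq_zero hdeg, mul_zero, sub_zero]
  rw [deriv_orthonormalSeq_eq_sum (L' := L') (fun n => by simpa [L', pow_succ'] using hL n) hP hP',
    Finset.sum_range_succ, Finset.sum_eq_zero fun i hi => by
      rw [hbelow i (Finset.mem_range.1 hi), zero_smul]]
  simp [hL'_apply]

end Deformation

section MomentFunctional

/-- The linear functional on polynomials with prescribed moments `m n` (the values on `X ^ n`).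
An integral against a weight is encoded this way because `p ↦ ∫ p w` is linear only when all
moments of `w` are finite. -/
noncomputable def momentFunctional {R : Type*} [CommSemiring R] (m : ℕ → R) : R[X] →ₗ[R] R :=
  lsum fun n => m n • LinearMap.id

theorem momentFunctional_X_pow {R : Type*} [CommSemiring R] (m : ℕ → R) (n : ℕ) :
    momentFunctional m (X ^ n) = m n := by
  simp [momentFunctional, lsum_apply, X_pow_eq_monomial, sum_monomial_index]

theorem momentFunctional_integral {μ : Measure ℝ} {w : ℝ → ℝ}
    (hw : ∀ n : ℕ, Integrable (fun x => x ^ n * w x) μ) (p : ℝ[X]) :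
    momentFunctional (fun n => ∫ x, x ^ n * w x ∂μ) p = ∫ x, p.eval x * w x ∂μ := by
  rw [map_eq_sum_coeff_mul _ (degree_le_natDegree.trans_lt (by exact_mod_cast Nat.lt_succ_self _))]
  simp only [momentFunctional_X_pow, eval_eq_sum_range, Finset.sum_mul, mul_assoc]
  rw [integral_finsetSum _ fun i _ => (hw i).const_mul _]
  simp only [integral_const_mul]

end MomentFunctional

section LaplaceTransform

variable {Ω : Type*} [MeasurableSpace Ω] {μ : Measure Ω} {g u : Ω → ℝ}

open ProbabilityTheory in
theorem hasDerivAt_integral_mul_exp_neg (hg : Measurable g) (hg0 : 0 ≤ᵐ[μ] g)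
    (hint : ∀ z > 0, Integrable (fun x => g x * Real.exp (-z * u x)) μ) {ζ : ℝ} (hζ : 0 < ζ) :
    HasDerivAt (fun z => ∫ x, g x * Real.exp (-z * u x) ∂μ)
      (-∫ x, u x * g x * Real.exp (-ζ * u x) ∂μ) ζ := by
  let ν := μ.withDensity fun x => ENNReal.ofReal (g x)
  have hdensity : Measurable fun x => ENNReal.ofReal (g x) := hg.ennreal_ofReal
  have hfinite : ∀ᵐ x ∂μ, ENNReal.ofReal (g x) < ⊤ := ae_of_all _ fun _ => ENNReal.ofReal_lt_top
  have hν (f : Ω → ℝ) : ∫ x, f x ∂ν = ∫ x, g x * f x ∂μ := by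
    rw [integral_withDensity_eq_integral_toReal_smul hdensity hfinite]
    refine integral_congr_ae (hg0.mono fun x hx => ?_)
    simp only [ENNReal.toReal_ofReal hx, smul_eq_mul]
  have hmgf : (fun z => ∫ x, g x * Real.exp (-z * u x) ∂μ) = fun z => mgf u ν (-z) := by
    ext z
    exact (hν fun x => Real.exp (-z * u x)).symm
  have hsub : Set.Iio 0 ⊆ integrableExpSet u ν := fun t ht => by
    refine (integrable_withDensity_iff hdensity hfinite).2 ?_
    refine (hint (-t) (neg_pos.2 ht)).congr (hg0.mono fun x hx => ?_)
    simp only [ENNReal.toReal_ofReal hx, neg_neg, mul_comm]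
  have hmem : -ζ ∈ interior (integrableExpSet u ν) :=
    interior_maximal hsub isOpen_Iio (neg_lt_zero.2 hζ)
  rw [hmgf]
  refine ((hasDerivAt_mgf hmem).comp ζ (hasDerivAt_neg ζ)).congr_deriv ?_
  rw [hν, mul_neg_one]
  simp only [mul_left_comm, mul_assoc]

end LaplaceTransform

section BesselK

open Real

variable {ζ : ℝ}

theorem sq_div_two_le_cosh {t : ℝ} (ht : 0 ≤ t) : t ^ 2 / 2 ≤ cosh t := by
  have hsinh : t / 2 ≤ sinh (t / 2) := self_le_sinh_iff.2 (by positivity)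
  have hcosh : cosh t = 1 + 2 * sinh (t / 2) ^ 2 := by
    rw [← mul_div_cancel₀ t two_ne_zero, cosh_two_mul, cosh_sq', mul_div_cancel₀ t two_ne_zero]
    ring
  nlinarith

theorem integrableOn_exp_mul_exp_neg_mul_cosh (c : ℝ) (hζ : 0 < ζ) :
    IntegrableOn (fun t => exp (c * t) * exp (-ζ * cosh t)) (Set.Ioi 0) := by
  refine ((exp_neg_integrableOn_Ioi 0 one_pos).const_mul (exp ((c + 1) ^ 2 / (2 * ζ)))).mono'
    (by fun_prop) <| (ae_restrict_iff' measurableSet_Ioi).2 (ae_of_all _ fun t ht => ?_)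
  rw [norm_of_nonneg (by positivity), ← exp_add, ← exp_add, exp_le_exp]
  have hamgm : (c + 1) * t ≤ (c + 1) ^ 2 / (2 * ζ) + ζ * (t ^ 2 / 2) := by
    field_simp
    nlinarith [sq_nonneg (c + 1 - ζ * t)]
  linarith [mul_le_mul_of_nonneg_left (sq_div_two_le_cosh (le_of_lt ht)) hζ.le]

theorem integrableOn_cosh_mul_exp_neg_mul_cosh (ν : ℝ) (hζ : 0 < ζ) :
    IntegrableOn (fun t => cosh (ν * t) * exp (-ζ * cosh t)) (Set.Ioi 0) := by
  refine (((integrableOn_exp_mul_exp_neg_mul_cosh ν hζ).add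
    (integrableOn_exp_mul_exp_neg_mul_cosh (-ν) hζ)).div_const 2).congr (ae_of_all _ fun t => ?_)
  simp only [Pi.add_apply, cosh_eq (ν * t), neg_mul]
  ring

theorem integrableOn_sinh_mul_exp_neg_mul_cosh (ν : ℝ) (hζ : 0 < ζ) :
    IntegrableOn (fun t => sinh (ν * t) * exp (-ζ * cosh t)) (Set.Ioi 0) := by
  refine (((integrableOn_exp_mul_exp_neg_mul_cosh ν hζ).sub
    (integrableOn_exp_mul_exp_neg_mul_cosh (-ν) hζ)).div_const 2).congr (ae_of_all _ fun t => ?_)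
  simp only [Pi.sub_apply, sinh_eq (ν * t), neg_mul]
  ring

theorem besselK_pos (ν : ℝ) (hζ : 0 < ζ) : 0 < besselK ν ζ := by
  have hpos (t : ℝ) : 0 < cosh (ν * t) * exp (-ζ * cosh t) :=
    mul_pos (cosh_pos _) (exp_pos _)
  rw [besselK, integral_pos_iff_support_of_nonneg (fun t => (hpos t).le)
    (integrableOn_cosh_mul_exp_neg_mul_cosh ν hζ),
    Function.support_eq_univ fun t => (hpos t).ne']
  simp

theorem besselK_add_one_sub_besselK_sub_one (ν : ℝ) (hζ : 0 < ζ) :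
    besselK (ν + 1) ζ - besselK (ν - 1) ζ = 2 * ν / ζ * besselK ν ζ := by
  have hadd := integrableOn_cosh_mul_exp_neg_mul_cosh (ν + 1) hζ
  have hsub := integrableOn_cosh_mul_exp_neg_mul_cosh (ν - 1) hζ
  have hν := integrableOn_cosh_mul_exp_neg_mul_cosh ν hζ
  have hderiv (t : ℝ) : HasDerivAt (fun t => sinh (ν * t) * exp (-ζ * cosh t))
      (ν * (cosh (ν * t) * exp (-ζ * cosh t)) - ζ / 2 * (cosh ((ν + 1) * t) * exp (-ζ * cosh t)
        - cosh ((ν - 1) * t) * exp (-ζ * cosh t))) t := by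
    refine ((((hasDerivAt_id t).const_mul ν).sinh).mul
      ((hasDerivAt_cosh t).const_mul (-ζ)).exp).congr_deriv ?_
    rw [add_one_mul, sub_one_mul, cosh_add, cosh_sub, id]
    ring
  have hdiff : IntegrableOn (fun t => cosh ((ν + 1) * t) * exp (-ζ * cosh t)
      - cosh ((ν - 1) * t) * exp (-ζ * cosh t)) (Set.Ioi 0) := hadd.sub hsub
  have hint := (hν.const_mul ν).sub (hdiff.const_mul (ζ / 2))
  have hlim := tendsto_zero_of_hasDerivAt_of_integrableOn_Ioi (fun t _ => hderiv t) hint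
    (integrableOn_sinh_mul_exp_neg_mul_cosh ν hζ)
  have hparts : ν * besselK ν ζ - ζ / 2 * (besselK (ν + 1) ζ - besselK (ν - 1) ζ) = 0 := by
    simp only [besselK]
    rw [← integral_sub hadd hsub, ← integral_const_mul, ← integral_const_mul,
      ← integral_sub (hν.const_mul ν) (hdiff.const_mul (ζ / 2))]
    simpa using integral_Ioi_of_hasDerivAt_of_tendsto' (fun t _ => hderiv t) hint hlim
  field_simp
  linear_combination -2 * hparts

theorem hasDerivAt_besselK (ν : ℝ) (hζ : 0 < ζ) :
    HasDerivAt (besselK ν) (-((besselK (ν + 1) ζ + besselK (ν - 1) ζ) / 2)) ζ := by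
  refine (hasDerivAt_integral_mul_exp_neg (by fun_prop) (ae_of_all _ fun t => (cosh_pos _).le)
    (fun z hz => integrableOn_cosh_mul_exp_neg_mul_cosh ν hz) hζ).congr_deriv ?_
  rw [besselK, besselK, ← integral_add (integrableOn_cosh_mul_exp_neg_mul_cosh _ hζ)
    (integrableOn_cosh_mul_exp_neg_mul_cosh _ hζ), ← integral_div]
  congr 2 with t
  rw [add_one_mul, sub_one_mul, cosh_add, cosh_sub]
  ring

theorem hasDerivAt_div_besselK (ν : ℝ) (hζ : 0 < ζ) :
    HasDerivAt (fun z => z / besselK ν z)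
      ((besselK (ν + 1) ζ / besselK ν ζ - (ν - 1) / ζ) * (ζ / besselK ν ζ)) ζ := by
  have hK := (besselK_pos ν hζ).ne'
  refine ((hasDerivAt_id ζ).div (hasDerivAt_besselK ν hζ) hK).congr_deriv ?_
  have hrec : besselK (ν - 1) ζ = besselK (ν + 1) ζ - 2 * ν / ζ * besselK ν ζ := by
    linear_combination -besselK_add_one_sub_besselK_sub_one ν hζ
  rw [hrec, id]
  field_simp
  ring

end BesselK

section Weight

open Real

variable {ζ : ℝ}

theorem integrableOn_pow_mul_rpow_mul_exp_neg_mul (n : ℕ) {s : ℝ} (hs : 0 ≤ s) (hζ : 0 < ζ) :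
    IntegrableOn (fun x => x ^ n * (x ^ 2 - 1) ^ s * exp (-ζ * x)) (Set.Ioi 1) := by
  have hmajorant : IntegrableOn (fun x => x ^ (n + 2 * s) * exp (-ζ * x)) (Set.Ioi 1) := by
    have h := integrableOn_rpow_mul_exp_neg_mul_rpow (p := 1) (s := n + 2 * s)
      (by linarith [n.cast_nonneg (α := ℝ)]) one_pos hζ
    simp only [rpow_one] at h
    exact h.mono_set (Set.Ioi_subset_Ioi zero_le_one)
  refine hmajorant.mono' (by fun_prop) <|
    (ae_restrict_iff' measurableSet_Ioi).2 (ae_of_all _ fun x hx => ?_)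
  have hx0 : 0 < x := one_pos.trans hx
  have hx1 : 0 ≤ x ^ 2 - 1 := sub_nonneg.2 (one_le_pow₀ (le_of_lt hx))
  rw [norm_of_nonneg (by positivity), rpow_add hx0, rpow_natCast, rpow_mul hx0.le, rpow_two]
  gcongr
  linarith

theorem pow_mul_wgt_eq (l n : ℕ) (ζ x : ℝ) :
    x ^ n * wgt l ζ x = ζ / besselK 2 ζ / (2 * l + 1)
      * (x ^ n * (x ^ 2 - 1) ^ ((l : ℝ) + 1 / 2) * exp (-ζ * x)) := by
  rw [show besselK 2 ζ = K2 ζ from rfl, wgt, div_div, mul_comm (K2 ζ)]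
  ring

theorem integrableOn_pow_mul_wgt (l n : ℕ) (hζ : 0 < ζ) :
    IntegrableOn (fun x => x ^ n * wgt l ζ x) (Set.Ioi 1) := by
  simp only [pow_mul_wgt_eq]
  exact (integrableOn_pow_mul_rpow_mul_exp_neg_mul n (by positivity) hζ).const_mul _

theorem hasDerivAt_integral_pow_mul_rpow_mul_exp_neg (n : ℕ) {s : ℝ} (hs : 0 ≤ s) (hζ : 0 < ζ) :
    HasDerivAt (fun z => ∫ x in Set.Ioi 1, x ^ n * (x ^ 2 - 1) ^ s * exp (-z * x))
      (-∫ x in Set.Ioi 1, x ^ (n + 1) * (x ^ 2 - 1) ^ s * exp (-ζ * x)) ζ := by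
  have hnonneg : 0 ≤ᵐ[volume.restrict (Set.Ioi 1)] fun x : ℝ => x ^ n * (x ^ 2 - 1) ^ s :=
    (ae_restrict_iff' measurableSet_Ioi).2 <| ae_of_all _ fun x hx =>
      mul_nonneg (pow_nonneg (zero_le_one.trans (le_of_lt hx)) n)
        (rpow_nonneg (sub_nonneg.2 (one_le_pow₀ (le_of_lt hx))) s)
  refine (hasDerivAt_integral_mul_exp_neg (by fun_prop) hnonneg
    (fun z hz => integrableOn_pow_mul_rpow_mul_exp_neg_mul n hs hz) hζ).congr_deriv ?_
  simp only [pow_succ', mul_assoc]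

theorem hasDerivAt_integral_pow_mul_wgt (l n : ℕ) (hζ : 0 < ζ) :
    HasDerivAt (fun z => ∫ x in Set.Ioi 1, x ^ n * wgt l z x)
      ((Gfn ζ - 1 / ζ) * (∫ x in Set.Ioi 1, x ^ n * wgt l ζ x)
        - ∫ x in Set.Ioi 1, x ^ (n + 1) * wgt l ζ x) ζ := by
  simp only [pow_mul_wgt_eq, integral_const_mul]
  refine (((hasDerivAt_div_besselK 2 hζ).div_const _).mul
    (hasDerivAt_integral_pow_mul_rpow_mul_exp_neg n (by positivity) hζ)).congr_deriv ?_
  have hG : besselK (2 + 1) ζ / besselK 2 ζ - (2 - 1) / ζ = Gfn ζ - 1 / ζ := by norm_num [Gfn]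
  rw [hG]
  ring

/-- The functional `p ↦ ∫₁^∞ p(x) ω^{(ℓ)}(x;ζ) dx`, encoded by its moments; for `ζ ≤ 0` the moments
may be junk values of divergent integrals. -/
noncomputable def wgtFunctional (l : ℕ) (ζ : ℝ) : ℝ[X] →ₗ[ℝ] ℝ :=
  momentFunctional fun n => ∫ x in Set.Ioi 1, x ^ n * wgt l ζ x

theorem wgtFunctional_apply (l : ℕ) (hζ : 0 < ζ) (p : ℝ[X]) :
    wgtFunctional l ζ p = ∫ x in Set.Ioi 1, p.eval x * wgt l ζ x :=
  momentFunctional_integral (fun n => integrableOn_pow_mul_wgt l n hζ) p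

theorem hasDerivAt_wgtFunctional_X_pow (l n : ℕ) (hζ : 0 < ζ) :
    HasDerivAt (fun z => wgtFunctional l z (X ^ n))
      ((Gfn ζ - 1 / ζ) * wgtFunctional l ζ (X ^ n) - wgtFunctional l ζ (X ^ (n + 1))) ζ := by
  simpa only [wgtFunctional, momentFunctional_X_pow] using hasDerivAt_integral_pow_mul_wgt l n hζ

theorem IsOrthoFam.isOrthonormalSeq {l : ℕ} {P : ℕ → ℝ[X]} (hP : IsOrthoFam l ζ P) (hζ : 0 < ζ) :
    IsOrthonormalSeq (wgtFunctional l ζ) P where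
  degree_eq := hP.1
  map_mul i j := by simpa only [wgtFunctional_apply l hζ, eval_mul] using hP.2.2 i j

theorem aCoef_eq_wgtFunctional (l : ℕ) (hζ : 0 < ζ) (P : ℕ → ℝ[X]) (k : ℕ) :
    aCoef l ζ P k = wgtFunctional l ζ (X * P k * P (k + 1)) := by
  simp only [aCoef, wgtFunctional_apply l hζ, eval_mul, eval_X]

theorem bCoef_eq_wgtFunctional (l : ℕ) (hζ : 0 < ζ) (P : ℕ → ℝ[X]) (k : ℕ) :
    bCoef l ζ P k = wgtFunctional l ζ (X * P k * P k) := by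
  simp only [bCoef, wgtFunctional_apply l hζ, eval_mul, eval_X, sq, mul_assoc]

end Weight

theorem stmt10 (l : ℕ) (I : Set ℝ) (hIopen : IsOpen I) (hIsub : I ⊆ Set.Ioi (0 : ℝ))
    (P : ℝ → ℕ → Polynomial ℝ)
    (hP : ∀ ζ ∈ I, IsOrthoFam l ζ (P ζ))
    (hdiff : ∀ k n : ℕ, DifferentiableOn ℝ (fun ζ => (P ζ k).coeff n) I) :
    ∀ k : ℕ, ∀ ζ ∈ I, ∀ x : ℝ,
      deriv (fun ζ' => (P ζ' (k + 1)).eval x) ζ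
        = aCoef l ζ (P ζ) k * (P ζ k).eval x
          - (1 / 2) * (Gfn ζ - 1 / ζ - bCoef l ζ (P ζ) (k + 1)) * (P ζ (k + 1)).eval x := by
  intro k ζ hζ x
  have hI : I ∈ nhds ζ := hIopen.mem_nhds hζ
  have hζ0 : 0 < ζ := hIsub hζ
  have hortho : ∀ᶠ z in nhds ζ, IsOrthonormalSeq (wgtFunctional l z) (P z) :=
    Filter.eventually_of_mem hI fun z hz => (hP z hz).isOrthonormalSeq (hIsub hz)
  have hdeg (n : ℕ) : ∀ᶠ z in nhds ζ, (P z n).degree < (n + 1 : ℕ) :=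
    hortho.mono fun z hz => hz.degree_lt_succ n
  choose P' hP' using fun n => exists_hasCoeffDerivAt (hdeg n) fun m =>
    (hdiff n m).differentiableAt hI
  have htoda := deriv_orthonormalSeq_toda
    (fun n => hasDerivAt_wgtFunctional_X_pow l n hζ0) hortho hP' k
  rw [((hP' (k + 1)).eval (hdeg (k + 1)) x).deriv, htoda, aCoef_eq_wgtFunctional l hζ0,
    bCoef_eq_wgtFunctional l hζ0, eval_sub, eval_smul, eval_smul, smul_eq_mul, smul_eq_mul]
  ring
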